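/- Let a, b be integers with a² + ab + b² ≥ 7, let ω = e^{0.11πi} ∈ ℂ, and let A = A(a,b) be the 4×4 matrix with rows (−1, 1, 0, 0), (0, −1, 0, 0), (0, 0, −1, 1), (a, b, 0, −1). Then the Hermitian matrix B = (1 − ω)·A + (1 − ω̄)·Aᵀ has exactly one positive eigenvalue and three negative eigenvalues (counted with multiplicity); in particular its signature equals −2. -/

import Mathlib

open Matrix Complex

/-!
Put `t = |1 - ω|² = 2 - 2 Re ω` and `d = a² + ab + b²`. As both the sum and the product of `1 - ω`
and `1 - ω̄` equal `t`, the characteristic polynomial of the form depends on `ω` only through `t`.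
Its roots are real and its constant term is `t²((1 - t)² - t d)`. If this is negative, then no root
is zero and some root is positive; moreover the coefficients change sign exactly once, so by
Descartes' rule of signs there is only one positive root. For `ω = exp(0.11πi)` one has
`(1 - t)² / t ≈ 6.58 < 7`.
-/

section RuleOfSigns

open Polynomial

theorem signVariations_eq_zero_of_coeff_nonneg {R : Type*} [Semiring R] [LinearOrder R]
    {p : R[X]} (hp : ∀ i, 0 ≤ p.coeff i) : p.signVariations = 0 := by
  induction hn : p.support.card using Nat.strong_induction_on generalizing p with
  | _ n ih =>
    rcases eq_or_ne p 0 with rfl | hp0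
    · exact signVariations_zero R
    have hlead : 0 < p.leadingCoeff := (hp _).lt_of_ne' (leadingCoeff_ne_zero.2 hp0)
    have herase (i : ℕ) : 0 ≤ p.eraseLead.coeff i := by
      rw [eraseLead_coeff]
      split_ifs
      exacts [le_rfl, hp i]
    have hsign : SignType.sign p.leadingCoeff ≠ -SignType.sign p.eraseLead.leadingCoeff := by
      rw [sign_pos hlead, ne_comm, ne_eq, neg_eq_iff_eq_neg, sign_eq_neg_one_iff, not_lt]
      exact herase _
    rw [signVariations_eq_eraseLead_add_ite hp0, if_neg hsign,
      ih _ (hn ▸ eraseLead_support_card_lt hp0) herase rfl]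

variable {R : Type*} [Ring R] [LinearOrder R] [IsOrderedRing R]

theorem signVariations_eq_zero_of_coeff_nonpos {p : R[X]} (hp : ∀ i, p.coeff i ≤ 0) :
    p.signVariations = 0 := by
  rw [← signVariations_neg]
  exact signVariations_eq_zero_of_coeff_nonneg fun i ↦ by simpa using hp i

theorem signVariations_eq_zero_of_leadingCoeff_neg {p : R[X]} (k : ℕ)
    (hlow : ∀ i < k, p.coeff i ≤ 0) (hhigh : ∀ i, k ≤ i → 0 ≤ p.coeff i)
    (hlead : p.leadingCoeff < 0) : p.signVariations = 0 := by
  have hdeg : p.natDegree < k := lt_of_not_ge fun hk ↦ (hhigh _ hk).not_gt hlead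
  refine signVariations_eq_zero_of_coeff_nonpos fun i ↦ ?_
  rcases lt_or_ge i k with hi | hi
  · exact hlow i hi
  · exact (coeff_eq_zero_of_natDegree_lt (hdeg.trans_le hi)).le

theorem signVariations_le_one_of_coeff {p : R[X]} (k : ℕ) (hlow : ∀ i < k, p.coeff i ≤ 0)
    (hhigh : ∀ i, k ≤ i → 0 ≤ p.coeff i) : p.signVariations ≤ 1 := by
  induction hn : p.support.card using Nat.strong_induction_on generalizing p with
  | _ n ih =>
    rcases lt_trichotomy p.leadingCoeff 0 with hneg | hzero | hpos
    · simp [signVariations_eq_zero_of_leadingCoeff_neg k hlow hhigh hneg]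
    · simp [leadingCoeff_eq_zero.1 hzero]
    have hp0 : p ≠ 0 := leadingCoeff_ne_zero.1 hpos.ne'
    have herase_low (i : ℕ) (hi : i < k) : p.eraseLead.coeff i ≤ 0 := by
      rw [eraseLead_coeff]
      split_ifs
      exacts [le_rfl, hlow i hi]
    have herase_high (i : ℕ) (hi : k ≤ i) : 0 ≤ p.eraseLead.coeff i := by
      rw [eraseLead_coeff]
      split_ifs
      exacts [le_rfl, hhigh i hi]
    rw [signVariations_eq_eraseLead_add_ite hp0]
    split_ifs with hsign
    · rw [sign_pos hpos, eq_comm, neg_eq_iff_eq_neg, sign_eq_neg_one_iff] at hsign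
      rw [signVariations_eq_zero_of_leadingCoeff_neg k herase_low herase_high hsign]
    · exact ih _ (hn ▸ eraseLead_support_card_lt hp0) herase_low herase_high rfl

theorem signVariations_quartic_le_one {c₃ c₂ c₁ c₀ : R} (h₃ : 0 ≤ c₃) (h₂₁ : 0 ≤ c₂ ∨ c₁ ≤ 0)
    (h₀ : c₀ ≤ 0) :
    (X ^ 4 + C c₃ * X ^ 3 + C c₂ * X ^ 2 + C c₁ * X + C c₀).signVariations ≤ 1 := by
  have hlead : (0 : R) ≤ 1 := zero_le_one
  obtain ⟨k, hk⟩ : ∃ k, (k = 1 ∧ 0 ≤ c₁ ∧ 0 ≤ c₂) ∨ (k = 2 ∧ c₁ ≤ 0 ∧ 0 ≤ c₂) ∨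
      (k = 3 ∧ c₁ ≤ 0 ∧ c₂ ≤ 0) := by
    grind
  refine signVariations_le_one_of_coeff k (fun i hi ↦ ?_) (fun i hi ↦ ?_) <;>
  · simp only [coeff_add, coeff_C_mul, coeff_X_pow, coeff_X, coeff_C]
    grind

end RuleOfSigns

section Eigenvalues

open Polynomial

variable {𝕜 n : Type*} [RCLike 𝕜] [Fintype n] [DecidableEq n] {A : Matrix n n 𝕜} {p : ℝ[X]}

theorem eq_prod_X_sub_C_eigenvalues (hA : A.IsHermitian)
    (hp : A.charpoly = p.map (algebraMap ℝ 𝕜)) : p = ∏ i, (X - C (hA.eigenvalues i)) := by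
  apply map_injective (algebraMap ℝ 𝕜) (algebraMap ℝ 𝕜).injective
  rw [← hp, hA.charpoly_eq]
  simp [Polynomial.map_prod]

theorem coeff_zero_eq_prod_neg_eigenvalues (hA : A.IsHermitian)
    (hp : A.charpoly = p.map (algebraMap ℝ 𝕜)) : p.coeff 0 = ∏ i, -hA.eigenvalues i := by
  rw [eq_prod_X_sub_C_eigenvalues hA hp, coeff_zero_eq_eval_zero, eval_prod]
  simp

theorem card_pos_eigenvalues_le_signVariations (hA : A.IsHermitian)
    (hp : A.charpoly = p.map (algebraMap ℝ 𝕜)) :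
    (Finset.univ.filter fun i ↦ 0 < hA.eigenvalues i).card ≤ p.signVariations := by
  have hroots : p.roots = Finset.univ.val.map hA.eigenvalues := by
    conv_lhs => rw [eq_prod_X_sub_C_eigenvalues hA hp]
    rw [roots_prod _ _ (Finset.prod_ne_zero_iff.2 fun i _ ↦ X_sub_C_ne_zero _)]
    simp
  calc (Finset.univ.filter fun i ↦ 0 < hA.eigenvalues i).card
      = p.roots.countP (0 < ·) := by rw [hroots, Multiset.countP_map]; rfl
    _ ≤ p.signVariations := roots_countP_pos_le_signVariations p

theorem det_ne_zero_of_coeff_zero_ne_zero (hp : A.charpoly = p.map (algebraMap ℝ 𝕜))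
    (h0 : p.coeff 0 ≠ 0) : A.det ≠ 0 := by
  rw [det_eq_sign_charpoly_coeff, hp, coeff_map]
  simpa using h0

theorem exists_pos_eigenvalue_of_coeff_zero_neg (hA : A.IsHermitian)
    (hp : A.charpoly = p.map (algebraMap ℝ 𝕜)) (h0 : p.coeff 0 < 0) :
    ∃ i, 0 < hA.eigenvalues i := by
  by_contra! hnonpos
  rw [coeff_zero_eq_prod_neg_eigenvalues hA hp] at h0
  exact h0.not_ge (Finset.prod_nonneg fun i _ ↦ neg_nonneg.2 (hnonpos i))

theorem card_pos_eigenvalues_eq_one (hA : A.IsHermitian)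
    (hp : A.charpoly = p.map (algebraMap ℝ 𝕜)) (h0 : p.coeff 0 < 0) (hvar : p.signVariations ≤ 1) :
    (Finset.univ.filter fun i ↦ 0 < hA.eigenvalues i).card = 1 := by
  obtain ⟨i, hi⟩ := exists_pos_eigenvalue_of_coeff_zero_neg hA hp h0
  exact ((card_pos_eigenvalues_le_signVariations hA hp).trans hvar).antisymm
    (Finset.card_pos.2 ⟨i, by simpa using hi⟩)

theorem card_pos_eigenvalues_add_card_neg_eigenvalues (hA : A.IsHermitian) (hdet : A.det ≠ 0) :
    (Finset.univ.filter fun i ↦ 0 < hA.eigenvalues i).card +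
      (Finset.univ.filter fun i ↦ hA.eigenvalues i < 0).card = Fintype.card n := by
  have hne (i : n) : hA.eigenvalues i ≠ 0 := by
    rw [hA.det_eq_prod_eigenvalues, Finset.prod_ne_zero_iff] at hdet
    exact_mod_cast hdet i (Finset.mem_univ i)
  have hneg : (Finset.univ.filter fun i ↦ hA.eigenvalues i < 0) =
      Finset.univ.filter fun i ↦ ¬ 0 < hA.eigenvalues i :=
    Finset.filter_congr fun i _ ↦ by rw [not_lt, (hne i).le_iff_lt]
  rw [hneg, Finset.card_filter_add_card_filter_not, Finset.card_univ]

end Eigenvalues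

/-- The Hermitian form `(1 - ω) A + (1 - ω̄) Aᵀ` whose signature is the Levine–Tristram signature
at `ω` of a link with Seifert matrix `A`. -/
noncomputable def levineTristramForm {n : Type*} (ω : ℂ) (A : Matrix n n ℂ) : Matrix n n ℂ :=
  (1 - ω) • A + (1 - (starRingEnd ℂ) ω) • Aᵀ

theorem levineTristramForm_isHermitian {n : Type*} (ω : ℂ) {A : Matrix n n ℂ} (hA : Aᴴ = Aᵀ) :
    (levineTristramForm ω A).IsHermitian := by
  have hA' : Aᵀᴴ = A := by rw [← hA, conjTranspose_conjTranspose]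
  simp [IsHermitian, levineTristramForm, hA, hA', add_comm]

section Plumbing

open Polynomial

variable {R : Type*} [CommRing R]

/-- The Seifert matrix of the plumbing of two positive trefoil fibre surfaces along an interval of
homology class `(a, b)`. -/
def trefoilPlumbingSeifert (a b : R) : Matrix (Fin 4) (Fin 4) R :=
  !![-1, 1, 0, 0; 0, -1, 0, 0; 0, 0, -1, 1; a, b, 0, -1]

/-- The characteristic polynomial of the Levine–Tristram form of `trefoilPlumbingSeifert a b` at a
point `ω` of the unit circle, in terms of `t = |1 - ω|²`. -/
noncomputable def trefoilPlumbingCharpoly (t a b : R) : R[X] :=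
  X ^ 4 + C (4 * t) * X ^ 3 + C (t * (6 * t - 2 - (a ^ 2 + b ^ 2))) * X ^ 2
    + C (t ^ 2 * (4 * (t - 1) - (2 * a ^ 2 + a * b + 2 * b ^ 2))) * X
    + C (t ^ 2 * ((1 - t) ^ 2 - t * (a ^ 2 + a * b + b ^ 2)))

theorem trefoilPlumbingCharpoly_map {S : Type*} [CommRing S] (f : R →+* S) (t a b : R) :
    (trefoilPlumbingCharpoly t a b).map f = trefoilPlumbingCharpoly (f t) (f a) (f b) := by
  simp [trefoilPlumbingCharpoly, map_ofNat f]

theorem trefoilPlumbingCharpoly_coeff_zero (t a b : R) :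
    (trefoilPlumbingCharpoly t a b).coeff 0 =
      t ^ 2 * ((1 - t) ^ 2 - t * (a ^ 2 + a * b + b ^ 2)) := by
  simp [trefoilPlumbingCharpoly, coeff_zero_eq_eval_zero]

theorem trefoilPlumbingSeifert_conjTranspose (a b : ℝ) :
    (trefoilPlumbingSeifert (a : ℂ) b)ᴴ = (trefoilPlumbingSeifert (a : ℂ) b)ᵀ := by
  ext i j
  fin_cases i <;> fin_cases j <;> simp [trefoilPlumbingSeifert]

theorem charpoly_smul_trefoilPlumbingSeifert_add_smul_transpose (s s' a b : R) :
    (s • trefoilPlumbingSeifert a b + s' • (trefoilPlumbingSeifert a b)ᵀ).charpoly =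
      (X + C (s + s')) ^ 4 - C (s * s' * (2 + a ^ 2 + b ^ 2)) * (X + C (s + s')) ^ 2
        - C (s * s' * (s + s') * a * b) * (X + C (s + s')) + C ((s * s') ^ 2) := by
  have hmatrix :
      charmatrix (s • trefoilPlumbingSeifert a b + s' • (trefoilPlumbingSeifert a b)ᵀ) =
        !![X + C (s + s'), -C s, 0, -C (s' * a); -C s', X + C (s + s'), 0, -C (s' * b);
          0, 0, X + C (s + s'), -C s; -C (s * a), -C (s * b), -C s', X + C (s + s')] := by
    ext i j : 2
    fin_cases i <;> fin_cases j <;> simp [trefoilPlumbingSeifert] <;> ring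
  rw [Matrix.charpoly, hmatrix]
  simp [det_succ_row_zero, Fin.sum_univ_succ, Fin.succAbove, map_ofNat]
  ring

theorem charpoly_smul_add_smul_transpose_eq_trefoilPlumbingCharpoly {s s' t : R} (a b : R)
    (hadd : s + s' = t) (hmul : s * s' = t) :
    (s • trefoilPlumbingSeifert a b + s' • (trefoilPlumbingSeifert a b)ᵀ).charpoly =
      trefoilPlumbingCharpoly t a b := by
  rw [charpoly_smul_trefoilPlumbingSeifert_add_smul_transpose, hadd, hmul, trefoilPlumbingCharpoly]
  simp only [map_add, map_sub, map_mul, map_pow, map_one, map_ofNat]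
  ring

theorem signVariations_trefoilPlumbingCharpoly_le_one {t a b : ℝ} (ht : 0 ≤ t)
    (hd : (1 - t) ^ 2 ≤ t * (a ^ 2 + a * b + b ^ 2)) :
    (trefoilPlumbingCharpoly t a b).signVariations ≤ 1 := by
  have hmiddle : a ^ 2 + b ^ 2 ≤ 6 * t - 2 ∨ 4 * (t - 1) ≤ 2 * a ^ 2 + a * b + 2 * b ^ 2 := by
    have hform : 3 / 2 * (a ^ 2 + b ^ 2) ≤ 2 * a ^ 2 + a * b + 2 * b ^ 2 := by
      nlinarith [sq_nonneg (a + b)]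
    by_contra! h
    linarith
  refine signVariations_quartic_le_one (by positivity) (hmiddle.imp (fun h ↦ ?_) fun h ↦ ?_)
    (mul_nonpos_of_nonneg_of_nonpos (sq_nonneg t) (sub_nonpos.2 hd))
  · exact mul_nonneg ht (sub_nonneg.2 h)
  · exact mul_nonpos_of_nonneg_of_nonpos (sq_nonneg t) (sub_nonpos.2 h)

theorem charpoly_levineTristramForm_trefoilPlumbingSeifert (a b : ℝ) {ω : ℂ} (hω : ‖ω‖ = 1) :
    (levineTristramForm ω (trefoilPlumbingSeifert (a : ℂ) b)).charpoly =
      (trefoilPlumbingCharpoly (2 - 2 * ω.re) a b).map (algebraMap ℝ ℂ) := by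
  have hadd : (1 - ω) + (1 - (starRingEnd ℂ) ω) = (2 - 2 * ω.re : ℝ) := by
    have := add_conj ω
    push_cast at this ⊢
    linear_combination -this
  have hmul : (1 - ω) * (1 - (starRingEnd ℂ) ω) = (2 - 2 * ω.re : ℝ) := by
    have : ω * (starRingEnd ℂ) ω = 1 := by simp [mul_conj', hω]
    rw [← hadd]
    linear_combination this
  rw [levineTristramForm, trefoilPlumbingCharpoly_map]
  exact charpoly_smul_add_smul_transpose_eq_trefoilPlumbingCharpoly _ _ hadd hmul

end Plumbing

-- `(2 c - 1)² < 7 (2 - 2 c)` holds for `-1 ≤ c` up to `c ≈ 0.9437`, and `cos (0.11 π) ≈ 0.9409`.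
theorem cos_eleven_hundredths_pi_lt : Real.cos (0.11 * Real.pi) < 0.943 := by
  have hlower := Real.pi_gt_d2
  have hupper := Real.pi_lt_d2
  have habs : |0.11 * Real.pi| = 0.11 * Real.pi := abs_of_pos (by positivity)
  have htaylor := (abs_le.1 (Real.cos_bound (x := 0.11 * Real.pi) (by linarith))).2
  have hfourth : |0.11 * Real.pi| ^ 4 ≤ 0.35 ^ 4 := by
    gcongr
    linarith
  nlinarith

theorem two_mul_cos_sub_one_sq_lt {d : ℝ} (hd : 7 ≤ d) :
    (2 * Real.cos (0.11 * Real.pi) - 1) ^ 2 < (2 - 2 * Real.cos (0.11 * Real.pi)) * d := by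
  have hlt := cos_eleven_hundredths_pi_lt
  have hge := Real.neg_one_le_cos (0.11 * Real.pi)
  calc (2 * Real.cos (0.11 * Real.pi) - 1) ^ 2
      < (2 - 2 * Real.cos (0.11 * Real.pi)) * 7 := by nlinarith
    _ ≤ (2 - 2 * Real.cos (0.11 * Real.pi)) * d := by
      gcongr
      linarith [Real.cos_le_one (0.11 * Real.pi)]

theorem hermitian_signature_two_trefoil_plumbing_general (a b : ℝ) {ω : ℂ} (hω : ‖ω‖ = 1)
    (hd : (2 * ω.re - 1) ^ 2 < (2 - 2 * ω.re) * (a ^ 2 + a * b + b ^ 2)) :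
    ∃ hB : (levineTristramForm ω (trefoilPlumbingSeifert (a : ℂ) b)).IsHermitian,
      (Finset.univ.filter fun i : Fin 4 => 0 < hB.eigenvalues i).card = 1 ∧
      (Finset.univ.filter fun i : Fin 4 => hB.eigenvalues i < 0).card = 3 ∧
      ((Finset.univ.filter fun i : Fin 4 => 0 < hB.eigenvalues i).card : ℤ) -
        ((Finset.univ.filter fun i : Fin 4 => hB.eigenvalues i < 0).card : ℤ) = -2 := by
  have hB := levineTristramForm_isHermitian ω (trefoilPlumbingSeifert_conjTranspose a b)
  have hp := charpoly_levineTristramForm_trefoilPlumbingSeifert a b hω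
  have ht : 0 < 2 - 2 * ω.re :=
    pos_of_mul_pos_left ((sq_nonneg _).trans_lt hd) (by nlinarith [sq_nonneg (a + b)])
  have hcoeff : (trefoilPlumbingCharpoly (2 - 2 * ω.re) a b).coeff 0 < 0 := by
    rw [trefoilPlumbingCharpoly_coeff_zero]
    exact mul_neg_of_pos_of_neg (by positivity) (by linarith)
  have hpos := card_pos_eigenvalues_eq_one hB hp hcoeff
    (signVariations_trefoilPlumbingCharpoly_le_one ht.le (by linarith))
  have hsum := card_pos_eigenvalues_add_card_neg_eigenvalues hB
    (det_ne_zero_of_coeff_zero_ne_zero hp hcoeff.ne)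
  rw [Fintype.card_fin] at hsum
  exact ⟨hB, hpos, by lia, by lia⟩

theorem hermitian_signature_two_trefoil_plumbing (a b : ℤ)
    (hd : 7 ≤ a ^ 2 + a * b + b ^ 2)
    (ω : ℂ) (hω : ω = Complex.exp ((0.11 * Real.pi : ℝ) * Complex.I))
    (A : Matrix (Fin 4) (Fin 4) ℂ)
    (hA : A = !![-1, 1, 0, 0; 0, -1, 0, 0; 0, 0, -1, 1; (a : ℂ), (b : ℂ), 0, -1]) :
    ∃ hB : ((1 - ω) • A + (1 - (starRingEnd ℂ) ω) • Aᵀ).IsHermitian,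
      (Finset.univ.filter fun i : Fin 4 => 0 < hB.eigenvalues i).card = 1 ∧
      (Finset.univ.filter fun i : Fin 4 => hB.eigenvalues i < 0).card = 3 ∧
      ((Finset.univ.filter fun i : Fin 4 => 0 < hB.eigenvalues i).card : ℤ) -
        ((Finset.univ.filter fun i : Fin 4 => hB.eigenvalues i < 0).card : ℤ) = -2 := by
  have hd' : (2 * ω.re - 1) ^ 2 < (2 - 2 * ω.re) * ((a : ℝ) ^ 2 + a * b + b ^ 2) := by
    rw [hω, exp_ofReal_mul_I_re]
    exact two_mul_cos_sub_one_sq_lt (by exact_mod_cast hd)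
  simpa [levineTristramForm, trefoilPlumbingSeifert, hA] using
    hermitian_signature_two_trefoil_plumbing_general a b (hω ▸ norm_exp_ofReal_mul_I _) hd'
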